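/- arXiv:1410.0815 — 6 statements merged into one kernel-verified Lean document; each statement's English description precedes it below -/
import Mathlib

section
/- Let A ∈ ℝ, let J ⊆ (1,∞) be open, and let g : J → ℝ be three times differentiable with g(t) ≠ 0 and g'''(t) = A·(g(t))^(−7)·(g'(t))^7·(g''(t))^3 for all t ∈ J. Define y(x) = (x−1)·g(x/(x−1)) on U = {x > 1 : x/(x−1) ∈ J}. Then for every x ∈ U, y is three times differentiable at x, y(x) ≠ 0, and y'''(x) = y''(x)·( A·(y'(x)·x − y'(x) − y(x))^7·(x−1)^12·(y''(x))^2 − 3·(y(x))^7 ) / ( (y(x))^7·(x−1) ). -/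
/-!
With `t = x/(x-1)`, so `dt/dx = -1/(x-1)²`, the chain rule gives on the open set `U`

* `y' = g(t) - g'(t)/(x-1)`,
* `y'' = g''(t)/(x-1)³`, the two `g'(t)`-terms cancelling,
* `y''' = -3 g''(t)/(x-1)⁴ - g'''(t)/(x-1)⁵`.

In particular `y'·x - y' - y = -g'(t)`, and inserting the equation for `g'''` into the last line
yields the transformed equation. The only analytic input is the derivative of `f(x/(x-1))`
(`hasDerivAt_comp_invol`); since `U` is open, each formula holds near every point of `U` and can be
differentiated again.
-/

lemma hasDerivAt_invol {x : ℝ} (hx : x - 1 ≠ 0) :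
    HasDerivAt (fun s : ℝ => s / (s - 1)) (-1 / (x - 1) ^ 2) x := by
  have h := (hasDerivAt_id x).div ((hasDerivAt_id x).sub_const 1) hx
  refine h.congr_deriv ?_
  simp only [id]
  ring

lemma hasDerivAt_comp_invol {f : ℝ → ℝ} {x : ℝ} (hx : x - 1 ≠ 0)
    (hf : DifferentiableAt ℝ f (x / (x - 1))) :
    HasDerivAt (fun s : ℝ => f (s / (s - 1)))
      (deriv f (x / (x - 1)) * (-1 / (x - 1) ^ 2)) x :=
  HasDerivAt.comp x hf.hasDerivAt (hasDerivAt_invol hx)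

/-- Example 4.4: the fiber preserving transformation x̄ = x/(x−1), ȳ = y/(x−1) maps the ODE
ȳ''' = A·ȳ⁻⁷·ȳ'⁷·ȳ''³ to y''' = y''·(A·(y'x − y' − y)⁷·(x−1)¹²·y''² − 3y⁷)/(y⁷·(x−1)).
Here `g` is ȳ as a function of x̄ = t, and `y x = (x−1)·g (x/(x−1))` on
U = {x > 1 : x/(x−1) ∈ J}. -/
theorem stmt4 (A : ℝ) (J : Set ℝ) (hJopen : IsOpen J) (hJsub : J ⊆ Set.Ioi (1 : ℝ))
    (g : ℝ → ℝ)
    (hg1 : ∀ t ∈ J, DifferentiableAt ℝ g t)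
    (hg2 : ∀ t ∈ J, DifferentiableAt ℝ (deriv g) t)
    (hg3 : ∀ t ∈ J, DifferentiableAt ℝ (deriv (deriv g)) t)
    (hgne : ∀ t ∈ J, g t ≠ 0)
    (hode : ∀ t ∈ J, deriv (deriv (deriv g)) t
        = A * (g t) ^ (-7 : ℤ) * (deriv g t) ^ 7 * (deriv (deriv g) t) ^ 3)
    (y : ℝ → ℝ)
    (hy : ∀ x : ℝ, 1 < x → x / (x - 1) ∈ J → y x = (x - 1) * g (x / (x - 1))) :
    ∀ x : ℝ, 1 < x → x / (x - 1) ∈ J →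
      DifferentiableAt ℝ y x ∧
      DifferentiableAt ℝ (deriv y) x ∧
      DifferentiableAt ℝ (deriv (deriv y)) x ∧
      y x ≠ 0 ∧
      deriv (deriv (deriv y)) x
        = deriv (deriv y) x *
            (A * (deriv y x * x - deriv y x - y x) ^ 7 * (x - 1) ^ 12
                * (deriv (deriv y) x) ^ 2
              - 3 * (y x) ^ 7)
          / ((y x) ^ 7 * (x - 1)) := by
  have hU : ∀ x : ℝ, 1 < x → x / (x - 1) ∈ J →
      ∀ᶠ s in nhds x, 1 < s ∧ s / (s - 1) ∈ J := fun x hx hxJ =>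
    (lt_mem_nhds hx).and
      ((hasDerivAt_invol (sub_pos.2 hx).ne').continuousAt.eventually_mem (hJopen.mem_nhds hxJ))
  have d1 : ∀ x : ℝ, 1 < x → x / (x - 1) ∈ J →
      HasDerivAt y (g (x / (x - 1)) - deriv g (x / (x - 1)) / (x - 1)) x := by
    intro x hx hxJ
    have hne : x - 1 ≠ 0 := (sub_pos.2 hx).ne'
    have h := ((hasDerivAt_id x).sub_const 1).mul (hasDerivAt_comp_invol hne (hg1 _ hxJ))
    refine (h.congr_deriv ?_).congr_of_eventuallyEq
      ((hU x hx hxJ).mono fun s hs => hy s hs.1 hs.2)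
    simp only [id]
    field_simp
    ring
  have d2 : ∀ x : ℝ, 1 < x → x / (x - 1) ∈ J →
      HasDerivAt (deriv y) (deriv (deriv g) (x / (x - 1)) / (x - 1) ^ 3) x := by
    intro x hx hxJ
    have hne : x - 1 ≠ 0 := (sub_pos.2 hx).ne'
    have h := (hasDerivAt_comp_invol hne (hg1 _ hxJ)).sub
      ((hasDerivAt_comp_invol hne (hg2 _ hxJ)).div ((hasDerivAt_id x).sub_const 1) hne)
    refine (h.congr_deriv ?_).congr_of_eventuallyEq
      ((hU x hx hxJ).mono fun s hs => (d1 s hs.1 hs.2).deriv)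
    simp only [id]
    field_simp
    ring
  have d3 : ∀ x : ℝ, 1 < x → x / (x - 1) ∈ J →
      HasDerivAt (deriv (deriv y)) (-3 * deriv (deriv g) (x / (x - 1)) / (x - 1) ^ 4
        - deriv (deriv (deriv g)) (x / (x - 1)) / (x - 1) ^ 5) x := by
    intro x hx hxJ
    have hne : x - 1 ≠ 0 := (sub_pos.2 hx).ne'
    have h := (hasDerivAt_comp_invol hne (hg3 _ hxJ)).div
      (((hasDerivAt_id x).sub_const 1).pow 3) (pow_ne_zero 3 hne)
    refine (h.congr_deriv ?_).congr_of_eventuallyEq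
      ((hU x hx hxJ).mono fun s hs => (d2 s hs.1 hs.2).deriv)
    simp only [id, Pi.pow_apply]
    field_simp
    ring
  intro x hx hxJ
  have hne : x - 1 ≠ 0 := (sub_pos.2 hx).ne'
  have hg0 := hgne _ hxJ
  refine ⟨(d1 x hx hxJ).differentiableAt, (d2 x hx hxJ).differentiableAt,
    (d3 x hx hxJ).differentiableAt, ?_, ?_⟩
  · rw [hy x hx hxJ]
    exact mul_ne_zero hne hg0
  · have key : deriv y x * x - deriv y x - y x = -deriv g (x / (x - 1)) := by
      rw [(d1 x hx hxJ).deriv, hy x hx hxJ]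
      field_simp
      ring
    rw [key, (d3 x hx hxJ).deriv, (d2 x hx hxJ).deriv, hy x hx hxJ, hode _ hxJ,
      show (-7 : ℤ) = -((7 : ℕ) : ℤ) by norm_num, zpow_neg, zpow_natCast]
    -- The identity is rational in `x - 1` and the values of `g`, `g'`, `g''` at `x/(x-1)`;
    -- naming these keeps `field_simp` from rewriting inside the arguments.
    generalize g (x / (x - 1)) = a at *
    generalize deriv g (x / (x - 1)) = b at *
    generalize deriv (deriv g) (x / (x - 1)) = c at *
    generalize x - 1 = u at *
    field_simp
    ring
end

section
/- On ℝ^43 with coordinates z₁,…,z₄₃ and standard basis vectors e₁,…,e₄₃, define the smooth vector fields X₇(z) = e₅ + z₄₀·e₄₃, X₁₆(z) = e₃₅, and X₈(z) = 3z₃·e₅ − z₈·e₆ + 3·e₇ − 2z₁₁·e₉ − z₁₃·e₁₀ − z₁₄·e₁₁ − 3z₁₇·e₁₅ − 2z₁₉·e₁₆ − 2z₂₀·e₁₇ − z₂₂·e₁₈ − z₂₃·e₁₉ − z₂₄·e₂₀ + 6z₄·e₂₅ − (z₂₈ + z₇)·e₂₆ − 2z₈·e₂₇ + 3·e₂₈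 − (2z₁₀ + 2z₃₁)·e₂₉ − (2z₁₁ + z₁₂ + z₃₃)·e₃₀ − (z₁₃ + z₃₄)·e₃₁ − 4z₁₃·e₃₂ − 2z₁₄·e₃₃ + 10z₅·e₃₅ − (2z₂₇ + z₃₈)·e₃₆ − 4z₂₈·e₃₇ + 15z₂₅·e₃₉ + (z₄₁ + 2z₄₀·z₃)·e₄₃. Then the Lie bracket satisfies [X₇, X₈] = 10·X₁₆, i.e. for every z ∈ ℝ^43, DX₈(z)(X₇(z)) − DX₇(z)(X₈(z)) = 10·e₃₅. -/
/-!
The two directional derivatives are read off along straight lines. The field `X7` moves only the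
coordinates z₅ and z₄₃; the only coefficient of `X8` involving either of them is the coefficient
10·z₅ of e₃₅, so `X8 (z + t • X7 z) = X8 z + t • (10 • e 35)`. The field `X7` depends on z₄₀
alone and `X8` has no e₄₀ component, so `X7` is constant along `t ↦ z + t • X8 z`. Both
fields are differentiable, so the Fréchet derivatives are the derivatives along these lines
(`fderiv_apply_of_affine_line`), and the bracket is `10 • e 35 - 0`.
-/

noncomputable section

/-- ℝ^43 with coordinates z₁, …, z₄₃ (1-based). -/
abbrev V43 : Type := Fin 43 → ℝ

/-- The standard basis vector eₙ (1-based index). -/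
def e (n : ℕ) : V43 := fun i => if (i : ℕ) = n - 1 then 1 else 0

/-- The coordinate zₙ (1-based index). -/
def zc (n : ℕ) (z : V43) : ℝ := if h : n - 1 < 43 then z ⟨n - 1, h⟩ else 0

/-- The vector field X₇ of Appendix A. -/
def X7 (z : V43) : V43 := e 5 + zc 40 z • e 43

/-- The vector field X₁₆ of Appendix A. -/
def X16 (_ : V43) : V43 := e 35

/-- The vector field X₈ of Appendix A. -/
def X8 (z : V43) : V43 :=
  (3 * zc 3 z) • e 5 - zc 8 z • e 6 + (3 : ℝ) • e 7
  - (2 * zc 11 z) • e 9 - zc 13 z • e 10 - zc 14 z • e 11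
  - (3 * zc 17 z) • e 15 - (2 * zc 19 z) • e 16 - (2 * zc 20 z) • e 17
  - zc 22 z • e 18 - zc 23 z • e 19 - zc 24 z • e 20
  + (6 * zc 4 z) • e 25 - (zc 28 z + zc 7 z) • e 26 - (2 * zc 8 z) • e 27
  + (3 : ℝ) • e 28
  - (2 * zc 10 z + 2 * zc 31 z) • e 29
  - (2 * zc 11 z + zc 12 z + zc 33 z) • e 30
  - (zc 13 z + zc 34 z) • e 31
  - (4 * zc 13 z) • e 32 - (2 * zc 14 z) • e 33
  + (10 * zc 5 z) • e 35 - (2 * zc 27 z + zc 38 z) • e 36 - (4 * zc 28 z) • e 37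
  + (15 * zc 25 z) • e 39
  + (zc 41 z + 2 * zc 40 z * zc 3 z) • e 43

theorem zc_add (n : ℕ) (z w : V43) : zc n (z + w) = zc n z + zc n w := by
  unfold zc
  split_ifs <;> simp

theorem zc_sub (n : ℕ) (z w : V43) : zc n (z - w) = zc n z - zc n w := by
  unfold zc
  split_ifs <;> simp

theorem zc_smul (n : ℕ) (a : ℝ) (z : V43) : zc n (a • z) = a * zc n z := by
  unfold zc
  split_ifs <;> simp

theorem zc_e (n m : ℕ) : zc n (e m) = if n - 1 < 43 ∧ n - 1 = m - 1 then 1 else 0 := by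
  unfold zc e
  split_ifs <;> simp_all <;> omega

@[fun_prop]
theorem differentiable_zc (n : ℕ) : Differentiable ℝ (zc n) := by
  unfold zc
  split_ifs <;> fun_prop

theorem differentiable_X7 : Differentiable ℝ X7 := by
  unfold X7
  fun_prop

theorem differentiable_X8 : Differentiable ℝ X8 := by
  unfold X8
  fun_prop

/-- If a differentiable field is affine with slope `c` along the line through `z` in the
direction `v`, then its Fréchet derivative at `z` sends `v` to `c`. -/
theorem fderiv_apply_of_affine_line {F : V43 → V43} {z v c : V43} (hF : DifferentiableAt ℝ F z)
    (h : ∀ t : ℝ, F (z + t • v) = F z + t • c) : fderiv ℝ F z v = c := by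
  rw [← hF.lineDeriv_eq_fderiv, lineDeriv]
  simp_rw [h]
  have hd : HasDerivAt (fun t : ℝ => F z + t • c) ((1 : ℝ) • c) 0 :=
    ((hasDerivAt_id (0 : ℝ)).smul_const c).const_add (F z)
  simpa using hd.deriv

theorem X8_line (z : V43) (t : ℝ) : X8 (z + t • X7 z) = X8 z + t • ((10 : ℝ) • e 35) := by
  simp only [X8, X7, zc_add, zc_smul, zc_e]
  norm_num
  module

theorem zc_forty_X8 (z : V43) : zc 40 (X8 z) = 0 := by
  simp only [X8, zc_add, zc_sub, zc_smul, zc_e]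
  norm_num

theorem X7_line (z : V43) (t : ℝ) : X7 (z + t • X8 z) = X7 z + t • (0 : V43) := by
  simp [X7, zc_add, zc_smul, zc_forty_X8]

/-- The commutator relation [e₇, e₈] = 10·e₁₆ of Appendix B: [X₇, X₈] = 10·X₁₆, where the
Lie bracket of vector fields is [V, W](z) = DW(z)(V(z)) − DV(z)(W(z)). -/
theorem stmt9 : ∀ z : V43,
    fderiv ℝ X8 z (X7 z) - fderiv ℝ X7 z (X8 z) = (10 : ℝ) • e 35 := by
  intro z
  rw [fderiv_apply_of_affine_line (differentiable_X8 z) (X8_line z),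
    fderiv_apply_of_affine_line (differentiable_X7 z) (X7_line z), sub_zero]

end
end

section
/- On ℝ^43 with coordinates z₁,…,z₄₃ and standard basis vectors e₁,…,e₄₃, define the smooth vector fields X₂₂(z) = e₃₉, X₂₃(z) = e₃₆ + 6z₃·e₃₉, X₂₄(z) = e₂₉ + 5z₃·e₃₆ + 15z₃²·e₃₉, X₂₅(z) = e₁₅ + 4z₃·e₂₉ + 10z₃²·e₃₆ + 20z₃³·e₃₉, X₂₆(z) = 3z₃·e₁₅ + 6z₃²·e₂₉ + 10z₃³·e₃₆ + 15z₃⁴·e₃₉, X₂₇(z) = 3z₃²·e₁₅ + 4z₃³·e₂₉ + 5z₃⁴·e₃₆ + 6z₃⁵·e₃₉, X₂₈(z) = z₃³·e₁₅ + z₃⁴·e₂₉ + z₃⁵·e₃₆ + z₃⁶·e₃₉, T₅(z) = −z₃·e₂₅ − e₂₇ − 5z₄·e₃₅ + z₈·e₃₇ − 3·e₃₈ − 15z₅·e₃₉, T₆(z) = −z₃·e₃₅ − e₃₇ − 6z₄·e₃₉, and T₇(z) = −z₃·e₃₉. Then these ten vector fields pairwise commute: for any two fields V, W among them and every z ∈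 ℝ^43, DW(z)(V(z)) − DV(z)(W(z)) = 0. -/
/-! The coefficients of the ten fields are functions of `z₃`, `z₄`, `z₅`, `z₈` alone
(`Flds_congr`), while every field has zero component along `e₃`, `e₄`, `e₅`, `e₈` (`zc_Flds`).
Moving in the direction of one field therefore leaves every other field unchanged, so each
directional derivative in the bracket is already zero (`fderiv_Flds_apply`). -/

noncomputable section

/-- The vector field X₂₂ of Appendix A. -/
def X22 (_ : V43) : V43 := e 39

/-- The vector field X₂₃ of Appendix A. -/
def X23 (z : V43) : V43 := e 36 + (6 * zc 3 z) • e 39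

/-- The vector field X₂₄ of Appendix A. -/
def X24 (z : V43) : V43 :=
  e 29 + (5 * zc 3 z) • e 36 + (15 * (zc 3 z) ^ 2) • e 39

/-- The vector field X₂₅ of Appendix A. -/
def X25 (z : V43) : V43 :=
  e 15 + (4 * zc 3 z) • e 29 + (10 * (zc 3 z) ^ 2) • e 36 + (20 * (zc 3 z) ^ 3) • e 39

/-- The vector field X₂₆ of Appendix A. -/
def X26 (z : V43) : V43 :=
  (3 * zc 3 z) • e 15 + (6 * (zc 3 z) ^ 2) • e 29 + (10 * (zc 3 z) ^ 3) • e 36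
    + (15 * (zc 3 z) ^ 4) • e 39

/-- The vector field X₂₇ of Appendix A. -/
def X27 (z : V43) : V43 :=
  (3 * (zc 3 z) ^ 2) • e 15 + (4 * (zc 3 z) ^ 3) • e 29 + (5 * (zc 3 z) ^ 4) • e 36
    + (6 * (zc 3 z) ^ 5) • e 39

/-- The vector field X₂₈ of Appendix A. -/
def X28 (z : V43) : V43 :=
  ((zc 3 z) ^ 3) • e 15 + ((zc 3 z) ^ 4) • e 29 + ((zc 3 z) ^ 5) • e 36
    + ((zc 3 z) ^ 6) • e 39

/-- The vector field T₅ of Appendix A. -/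
def T5 (z : V43) : V43 :=
  -(zc 3 z • e 25) - e 27 - (5 * zc 4 z) • e 35 + zc 8 z • e 37 - (3 : ℝ) • e 38
    - (15 * zc 5 z) • e 39

/-- The vector field T₆ of Appendix A. -/
def T6 (z : V43) : V43 := -(zc 3 z • e 35) - e 37 - (6 * zc 4 z) • e 39

/-- The vector field T₇ of Appendix A. -/
def T7 (z : V43) : V43 := -(zc 3 z • e 39)

/-- The ten vector fields X₂₂, …, X₂₈, T₅, T₆, T₇. -/
def Flds : Fin 10 → (V43 → V43) :=
  ![X22, X23, X24, X25, X26, X27, X28, T5, T6, T7]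

/-- A map that is constant along the line through `z` in the direction `v` has zero Fréchet
derivative at `z` in that direction; where the map is not differentiable, `fderiv` is zero by
convention, so no differentiability hypothesis is needed. -/
lemma fderiv_apply_eq_zero_of_const {W : V43 → V43} {z v : V43}
    (h : ∀ t : ℝ, W (z + t • v) = W z) : fderiv ℝ W z v = 0 := by
  by_cases hW : DifferentiableAt ℝ W z
  · rw [← hW.lineDeriv_eq_fderiv]
    simp [lineDeriv, h]
  · simp [fderiv_zero_of_not_differentiableAt hW]

lemma zc_add_smul (n : ℕ) (z v : V43) (t : ℝ) :
    zc n (z + t • v) = zc n z + t * zc n v := by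
  unfold zc
  split_ifs <;> simp

/-- None of the fields moves the coordinates `z₃`, `z₄`, `z₅`, `z₈`. -/
lemma zc_Flds (i : Fin 10) (z : V43) :
    zc 3 (Flds i z) = 0 ∧ zc 4 (Flds i z) = 0 ∧ zc 5 (Flds i z) = 0 ∧ zc 8 (Flds i z) = 0 := by
  fin_cases i <;> simp [Flds, X22, X23, X24, X25, X26, X27, X28, T5, T6, T7, zc, e]

/-- The coefficients of the fields depend on `z₃`, `z₄`, `z₅`, `z₈` only. -/
lemma Flds_congr (i : Fin 10) {z w : V43} (h3 : zc 3 w = zc 3 z) (h4 : zc 4 w = zc 4 z)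
    (h5 : zc 5 w = zc 5 z) (h8 : zc 8 w = zc 8 z) : Flds i w = Flds i z := by
  fin_cases i <;> simp [Flds, X22, X23, X24, X25, X26, X27, X28, T5, T6, T7, h3, h4, h5, h8]

/-- Each field is constant along the directions of all the others, so both terms of the bracket
vanish separately. -/
lemma fderiv_Flds_apply (i j : Fin 10) (z : V43) : fderiv ℝ (Flds j) z (Flds i z) = 0 := by
  obtain ⟨h3, h4, h5, h8⟩ := zc_Flds i z
  refine fderiv_apply_eq_zero_of_const fun t => Flds_congr j ?_ ?_ ?_ ?_ <;>
    simp [zc_add_smul, h3, h4, h5, h8]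

/-- The ten vector fields X₂₂, …, X₂₈, T₅, T₆, T₇ of Appendix A pairwise commute,
where the Lie bracket of vector fields is [V, W](z) = DW(z)(V(z)) − DV(z)(W(z)). -/
theorem stmt10 : ∀ i j : Fin 10, ∀ z : V43,
    fderiv ℝ (Flds j) z (Flds i z) - fderiv ℝ (Flds i) z (Flds j z) = 0 := by
  intro i j z
  rw [fderiv_Flds_apply, fderiv_Flds_apply, sub_zero]

end
end

section
/- Let A ≠ 0, α ∈ ℝ, and δ ∈ ℝ with δ ∉ {0, 1, 2}. For f(x,y,p,q) = A·x^α·q^δ on the region x > 0, q > 0, the differential invariant β₆ is given by β₆ = 2(δ−2)(2δ−3)/(3δ(δ−1)) + (α(δ−2)/(A·δ(δ−1)))·x^(−1−α)·q^(1−δ). -/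
/-!
On the quadrant `x > 0`, `q > 0` the monomials `c * x ^ a * q ^ r` are stable under `∂/∂x` and
`∂/∂q` and killed by `∂/∂y` and `∂/∂p` (`IsMonomial.pd1`, …, `IsMonomial.pd4`). Since the quadrant is
open, these rules can be iterated. Hence, with `f = A x ^ α q ^ δ`,
`f_qq = A δ (δ - 1) x ^ α q ^ (δ - 2)` and `f_qqq = A δ (δ - 1) (δ - 2) x ^ α q ^ (δ - 3)`, while
`γ₁₁` is the sum of a multiple of `x ^ (α - 1) q ^ (δ - 2)` and one of `x ^ (2 α) q ^ (2 δ - 3)`.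
Writing every power through `x ^ α`, `q ^ δ`, `x` and `q` turns the claim into an identity of rational
functions.
-/

noncomputable section

/-- Partial derivative of f(x,y,p,q) with respect to the first variable x. -/
def pd1 (f : ℝ → ℝ → ℝ → ℝ → ℝ) (x y p q : ℝ) : ℝ := deriv (fun s => f s y p q) x

/-- Partial derivative of f(x,y,p,q) with respect to the second variable y. -/
def pd2 (f : ℝ → ℝ → ℝ → ℝ → ℝ) (x y p q : ℝ) : ℝ := deriv (fun s => f x s p q) y

/-- Partial derivative of f(x,y,p,q) with respect to the third variable p. -/
def pd3 (f : ℝ → ℝ → ℝ → ℝ → ℝ) (x y p q : ℝ) : ℝ := deriv (fun s => f x y s q) p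

/-- Partial derivative of f(x,y,p,q) with respect to the fourth variable q. -/
def pd4 (f : ℝ → ℝ → ℝ → ℝ → ℝ) (x y p q : ℝ) : ℝ := deriv (fun s => f x y p s) q

/-- The operator Ḋg = g_x + p·g_y + q·g_p + f·g_q. -/
def Dop (f g : ℝ → ℝ → ℝ → ℝ → ℝ) (x y p q : ℝ) : ℝ :=
  pd1 g x y p q + p * pd2 g x y p q + q * pd3 g x y p q + f x y p q * pd4 g x y p q

/-- The relative invariant γ₄ = f_qq. -/
def gamma4 (f : ℝ → ℝ → ℝ → ℝ → ℝ) : ℝ → ℝ → ℝ → ℝ → ℝ := pd4 (pd4 f)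

/-- The relative invariant γ₅ = f_qqq. -/
def gamma5 (f : ℝ → ℝ → ℝ → ℝ → ℝ) : ℝ → ℝ → ℝ → ℝ → ℝ := pd4 (gamma4 f)

/-- The relative invariant γ₁₁ = λ₁₄ = (1/3)·(3·Ḋ(f_qq) + f_qq·f_q). -/
def gamma11 (f : ℝ → ℝ → ℝ → ℝ → ℝ) (x y p q : ℝ) : ℝ :=
  (1 / 3) * (3 * Dop f (gamma4 f) x y p q + gamma4 f x y p q * pd4 f x y p q)

/-- The third-order differential invariant β₆ = γ₅·γ₁₁/γ₄³ of Theorem 3.2. -/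
def beta6 (f : ℝ → ℝ → ℝ → ℝ → ℝ) (x y p q : ℝ) : ℝ :=
  gamma5 f x y p q * gamma11 f x y p q / (gamma4 f x y p q) ^ 3

/-- On the open quadrant `x > 0`, `q > 0`, the function `g` is the monomial `c * x ^ a * q ^ r`.
Nothing is said about `g` elsewhere, where the junk values of `rpow` and `deriv` intervene. -/
def IsMonomial (g : ℝ → ℝ → ℝ → ℝ → ℝ) (c a r : ℝ) : Prop :=
  ∀ x y p q : ℝ, 0 < x → 0 < q → g x y p q = c * x ^ a * q ^ r

theorem IsMonomial.pd4 {g : ℝ → ℝ → ℝ → ℝ → ℝ} {c a r : ℝ} (h : IsMonomial g c a r) :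
    IsMonomial (pd4 g) (c * r) a (r - 1) := by
  intro x y p q hx hq
  have he : (fun s => g x y p s) =ᶠ[nhds q] fun s => c * x ^ a * s ^ r := by
    filter_upwards [lt_mem_nhds hq] with s hs using h x y p s hx hs
  have hd := (Real.hasDerivAt_rpow_const (p := r) (Or.inl hq.ne')).const_mul (c * x ^ a)
  rw [_root_.pd4, he.deriv_eq, hd.deriv]
  ring

theorem IsMonomial.pd1 {g : ℝ → ℝ → ℝ → ℝ → ℝ} {c a r : ℝ} (h : IsMonomial g c a r) :
    IsMonomial (pd1 g) (c * a) (a - 1) r := by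
  intro x y p q hx hq
  have he : (fun s => g s y p q) =ᶠ[nhds x] fun s => c * s ^ a * q ^ r := by
    filter_upwards [lt_mem_nhds hx] with s hs using h s y p q hs hq
  have hd := ((Real.hasDerivAt_rpow_const (p := a) (Or.inl hx.ne')).const_mul c).mul_const (q ^ r)
  rw [_root_.pd1, he.deriv_eq, hd.deriv]
  ring

theorem IsMonomial.pd2 {g : ℝ → ℝ → ℝ → ℝ → ℝ} {c a r : ℝ} (h : IsMonomial g c a r)
    {x q : ℝ} (y p : ℝ) (hx : 0 < x) (hq : 0 < q) : pd2 g x y p q = 0 := by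
  simp [_root_.pd2, h x _ p q hx hq]

theorem IsMonomial.pd3 {g : ℝ → ℝ → ℝ → ℝ → ℝ} {c a r : ℝ} (h : IsMonomial g c a r)
    {x q : ℝ} (y p : ℝ) (hx : 0 < x) (hq : 0 < q) : pd3 g x y p q = 0 := by
  simp [_root_.pd3, h x y _ q hx hq]

/-- Example 4.3, equation (eee8): the invariant β₆ of the ODE ȳ''' = A·x̄^α·ȳ''^δ. -/
theorem stmt12 (A α δ : ℝ) (hA : A ≠ 0) (hδ0 : δ ≠ 0) (hδ1 : δ ≠ 1) (hδ2 : δ ≠ 2) :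
    ∀ x y p q : ℝ, 0 < x → 0 < q →
      beta6 (fun x _ _ q => A * x ^ α * q ^ δ) x y p q
        = 2 * (δ - 2) * (2 * δ - 3) / (3 * δ * (δ - 1))
          + (α * (δ - 2) / (A * δ * (δ - 1))) * (x ^ (-1 - α) * q ^ (1 - δ)) := by
  intro x y p q hx hq
  have h0 : IsMonomial (fun x _ _ q => A * x ^ α * q ^ δ) A α δ := fun _ _ _ _ _ _ => rfl
  have h4 : IsMonomial (gamma4 (fun x _ _ q => A * x ^ α * q ^ δ)) _ _ _ := h0.pd4.pd4
  have h5 : IsMonomial (gamma5 (fun x _ _ q => A * x ^ α * q ^ δ)) _ _ _ := h4.pd4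
  have hδ1' : δ - 1 ≠ 0 := sub_ne_zero.mpr hδ1
  have hX : x ^ α ≠ 0 := (Real.rpow_pos_of_pos hx α).ne'
  have hQ : q ^ δ ≠ 0 := (Real.rpow_pos_of_pos hq δ).ne'
  rw [beta6, gamma11, Dop, h4.pd2 y p hx hq, h4.pd3 y p hx hq, h4.pd1 x y p q hx hq,
    h4.pd4 x y p q hx hq, h5 x y p q hx hq, h4 x y p q hx hq, h0.pd4 x y p q hx hq]
  simp only [Real.rpow_sub hx, Real.rpow_sub hq, Real.rpow_one, Real.rpow_neg hx.le]
  field_simp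
  ring
end
end

section
/- Let A ≠ 0, α ∈ ℝ, and δ ∈ ℝ with δ ∉ {0, 1, 2}. For f(x,y,p,q) = A·x^α·q^δ on the region x > 0, q > 0, the differential invariant β₅ is given by β₅ = (2δ−3)(δ−2)²/(3δ(δ−1)²) + (α(δ−2)²/(A·δ(δ−1)²))·x^(−1−α)·q^(1−δ). -/
/-!
On the region x, q > 0 every function occurring in β₅ for f = A·x^α·q^δ is a monomial in x and q.
Since f does not depend on y or p, λ₅ vanishes and γ₁₀ reduces to
λ₁₂ = -f_q²/3 + f_xq + f·f_qq, while γ₄ = A·δ·(δ-1)·x^α·q^(δ-2) and γ₅ = (δ-2)·γ₄/q. Hence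
β₅ = (δ-2)²·λ₁₂/(q·γ₄)². The terms -f_q²/3 + f·f_qq contribute the constant
(δ-2)²/(δ-1)²·(-1/3 + (δ-1)/δ), and f_xq contributes the non-constant summand.

The power rule may fail at q = 0, so the iterated q-derivatives are computed on the open half-line
q > 0 only; `pd4_monomial` does this for any function that agrees with a monomial there.
-/

noncomputable section

/-- The relative invariant λ₅ = (1/3)·(2·f_pq·f_q − 2·f_p·f_qq − 6·f_yq + 3·f_pp). -/
def lam5 (f : ℝ → ℝ → ℝ → ℝ → ℝ) (x y p q : ℝ) : ℝ :=
  (1 / 3) * (2 * pd4 (pd3 f) x y p q * pd4 f x y p q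
    - 2 * pd3 f x y p q * pd4 (pd4 f) x y p q
    - 6 * pd4 (pd2 f) x y p q + 3 * pd3 (pd3 f) x y p q)

/-- The relative invariant λ₁₂ = (1/3)·(−f_q² − 3·f_p + 3·Ḋ(f_q)). -/
def lam12 (f : ℝ → ℝ → ℝ → ℝ → ℝ) (x y p q : ℝ) : ℝ :=
  (1 / 3) * (-(pd4 f x y p q) ^ 2 - 3 * pd3 f x y p q + 3 * Dop f (pd4 f) x y p q)

/-- The relative invariant γ₁₀ = (3·λ₅ + γ₄·λ₁₂)/γ₄. -/
def gamma10 (f : ℝ → ℝ → ℝ → ℝ → ℝ) (x y p q : ℝ) : ℝ :=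
  (3 * lam5 f x y p q + gamma4 f x y p q * lam12 f x y p q) / gamma4 f x y p q

/-- The third-order differential invariant β₅ = γ₅²·γ₁₀/γ₄⁴ of Theorem 3.2. -/
def beta5 (f : ℝ → ℝ → ℝ → ℝ → ℝ) (x y p q : ℝ) : ℝ :=
  (gamma5 f x y p q) ^ 2 * gamma10 f x y p q / (gamma4 f x y p q) ^ 4

/-- The power rule for the q-derivative of a function known to be a monomial in q only for q > 0,
so that it can be iterated without any information at q ≤ 0. -/
lemma pd4_monomial {g : ℝ → ℝ → ℝ → ℝ → ℝ} {x y p c r : ℝ}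
    (h : ∀ s, 0 < s → g x y p s = c * s ^ r) :
    ∀ q, 0 < q → pd4 g x y p q = c * r * q ^ (r - 1) := by
  intro q hq
  have hev : (fun s => g x y p s) =ᶠ[nhds q] fun s => c * s ^ r := by
    filter_upwards [lt_mem_nhds hq] with s hs using h s hs
  rw [pd4, hev.deriv_eq, ((Real.hasDerivAt_rpow_const (Or.inl hq.ne')).const_mul c).deriv]
  ring

/-- Example 4.3, equation (eee8): the invariant β₅ of the ODE ȳ''' = A·x̄^α·ȳ''^δ. -/
theorem stmt13 (A α δ : ℝ) (hA : A ≠ 0) (hδ0 : δ ≠ 0) (hδ1 : δ ≠ 1) (hδ2 : δ ≠ 2) :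
    ∀ x y p q : ℝ, 0 < x → 0 < q →
      beta5 (fun x _ _ q => A * x ^ α * q ^ δ) x y p q
        = (2 * δ - 3) * (δ - 2) ^ 2 / (3 * δ * (δ - 1) ^ 2)
          + (α * (δ - 2) ^ 2 / (A * δ * (δ - 1) ^ 2)) * (x ^ (-1 - α) * q ^ (1 - δ)) := by
  intro x y p q hx hq
  set f : ℝ → ℝ → ℝ → ℝ → ℝ := fun x _ _ q => A * x ^ α * q ^ δ with hf
  have hfq : ∀ x y p q, 0 < q → pd4 f x y p q = A * x ^ α * δ * q ^ (δ - 1) :=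
    fun x y p => pd4_monomial fun s _ => rfl
  have hfqq : ∀ q, 0 < q → pd4 (pd4 f) x y p q = A * x ^ α * δ * (δ - 1) * q ^ (δ - 1 - 1) :=
    pd4_monomial (hfq x y p)
  have hfqqq : ∀ q, 0 < q → pd4 (pd4 (pd4 f)) x y p q
      = A * x ^ α * δ * (δ - 1) * (δ - 1 - 1) * q ^ (δ - 1 - 1 - 1) :=
    pd4_monomial hfqq
  have h2 : pd2 f = fun _ _ _ _ => 0 := by
    funext x y p q; simp [pd2, hf]
  have h3 : pd3 f = fun _ _ _ _ => 0 := by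
    funext x y p q; simp [pd3, hf]
  have hlam5 : lam5 f x y p q = 0 := by
    have h33 : pd3 (fun _ _ _ _ => 0) x y p q = 0 := by simp [pd3]
    have h40 : pd4 (fun _ _ _ _ => 0) x y p q = 0 := by simp [pd4]
    simp [lam5, h2, h3, h33, h40]
  have h2q : pd2 (pd4 f) x y p q = 0 := by
    simp [pd2, pd4, hf]
  have h3q : pd3 (pd4 f) x y p q = 0 := by
    simp [pd3, pd4, hf]
  have h1q : pd1 (pd4 f) x y p q = A * (α * x ^ (α - 1)) * δ * q ^ (δ - 1) := by
    have hfun : (fun s => pd4 f s y p q) = fun s => A * s ^ α * δ * q ^ (δ - 1) :=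
      funext fun s => hfq s y p q hq
    rw [pd1, hfun]
    exact ((((Real.hasDerivAt_rpow_const (Or.inl hx.ne')).const_mul A).mul_const δ).mul_const
      (q ^ (δ - 1))).deriv
  have hlam12 : lam12 f x y p q = (1 / 3) * (-(A * x ^ α * δ * q ^ (δ - 1)) ^ 2
      + 3 * (A * (α * x ^ (α - 1)) * δ * q ^ (δ - 1)
        + A * x ^ α * q ^ δ * (A * x ^ α * δ * (δ - 1) * q ^ (δ - 1 - 1)))) := by
    simp only [lam12, Dop, h1q, h2q, h3q, hfqq q hq, hfq x y p q hq, h3]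
    simp only [hf]
    ring
  have hX : x ^ α ≠ 0 := (Real.rpow_pos_of_pos hx α).ne'
  have hQ : q ^ δ ≠ 0 := (Real.rpow_pos_of_pos hq δ).ne'
  have hδ1' : δ - 1 ≠ 0 := sub_ne_zero.mpr hδ1
  have hx0 := hx.ne'
  have hq0 := hq.ne'
  have hxneg : x ^ (-1 - α) = x⁻¹ / x ^ α := by
    rw [Real.rpow_sub hx, Real.rpow_neg_one]
  have hqneg : q ^ (1 - δ) = q / q ^ δ := by
    rw [Real.rpow_sub hq, Real.rpow_one]
  -- All powers become rational expressions in x, q, x^α and q^δ.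
  simp only [beta5, gamma10, gamma5, gamma4, hlam5, hlam12, hfqqq q hq, hfqq q hq, hxneg, hqneg,
    Real.rpow_sub_one hx0, Real.rpow_sub_one hq0]
  field_simp
  ring

end
end

section
/- Let A ≠ 0. For f(x,y,p,q) = A·x³·q⁴ on the region x > 0, q > 0, the differential invariants satisfy the identically vanishing relation 3·β₅ − 2·β₆ + 5/9 = 0 at every point (x,y,p,q) with x > 0 and q > 0. -/
/-!
All functions involved are monomials `B * x ^ m * q ^ n`, a class stable under `∂/∂x` and `∂/∂q`
and annihilated by `∂/∂y` and `∂/∂p` (`pd1_mono` to `pd4_mono`). For `f = A x³ q⁴` this gives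
`f_q = 4 A x³ q³`, `γ₄ = 12 A x³ q²`, `γ₅ = 24 A x³ q`, `λ₅ = 0`, and hence
`β₅ = 5/27 + 1 / (3 A x⁴ q³)` and `β₆ = 5/9 + 1 / (2 A x⁴ q³)`. The nonconstant terms of `3 β₅` and
`2 β₆` coincide, which leaves `5/9 - 10/9 + 5/9 = 0`.
-/

noncomputable section

/-- The monomial `B * x ^ m * q ^ n`, as a function of `(x, y, p, q)`. -/
def mono (B : ℝ) (m n : ℕ) : ℝ → ℝ → ℝ → ℝ → ℝ := fun x _ _ q => B * x ^ m * q ^ n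

lemma pd1_mono (B : ℝ) (m n : ℕ) : pd1 (mono B m n) = mono (B * m) (m - 1) n := by
  funext x y p q
  have h := ((hasDerivAt_pow m x).const_mul B).mul_const (q ^ n)
  simp only [pd1, mono, h.deriv]
  ring

lemma pd2_mono (B : ℝ) (m n : ℕ) : pd2 (mono B m n) = fun _ _ _ _ => 0 := by
  funext x y p q
  simp [pd2, mono]

lemma pd3_mono (B : ℝ) (m n : ℕ) : pd3 (mono B m n) = fun _ _ _ _ => 0 := by
  funext x y p q
  simp [pd3, mono]

lemma pd4_mono (B : ℝ) (m n : ℕ) : pd4 (mono B m n) = mono (B * n) m (n - 1) := by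
  funext x y p q
  have h := (hasDerivAt_pow n q).const_mul (B * x ^ m)
  simp only [pd4, mono, h.deriv]
  ring

lemma pd3_zero : pd3 (fun _ _ _ _ => 0) = fun _ _ _ _ => 0 := by
  funext x y p q
  simp [pd3]

lemma pd4_zero : pd4 (fun _ _ _ _ => 0) = fun _ _ _ _ => 0 := by
  funext x y p q
  simp [pd4]

/-- Remark 4.2: the identically constant invariant Ī₁ = 3β̄₅ − 2β̄₆ + 5/9 = 0 of the
equation ȳ''' = A·x̄³·ȳ''⁴. -/
theorem stmt14 (A : ℝ) (hA : A ≠ 0) :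
    ∀ x y p q : ℝ, 0 < x → 0 < q →
      3 * beta5 (fun x _ _ q => A * x ^ (3 : ℕ) * q ^ (4 : ℕ)) x y p q
        - 2 * beta6 (fun x _ _ q => A * x ^ (3 : ℕ) * q ^ (4 : ℕ)) x y p q
        + 5 / 9 = 0 := by
  intro x y p q hx hq
  have hx0 : x ≠ 0 := hx.ne'
  have hq0 : q ≠ 0 := hq.ne'
  change 3 * beta5 (mono A 3 4) x y p q - 2 * beta6 (mono A 3 4) x y p q + 5 / 9 = 0
  have h5 : beta5 (mono A 3 4) x y p q = 5 / 27 + 1 / (3 * A * x ^ 4 * q ^ 3) := by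
    simp only [beta5, gamma10, lam5, lam12, gamma5, gamma4, Dop, pd1_mono, pd2_mono, pd3_mono,
      pd4_mono, pd3_zero, pd4_zero]
    norm_num [mono]
    field_simp
    ring
  have h6 : beta6 (mono A 3 4) x y p q = 5 / 9 + 1 / (2 * A * x ^ 4 * q ^ 3) := by
    simp only [beta6, gamma11, gamma5, gamma4, Dop, pd1_mono, pd2_mono, pd3_mono, pd4_mono]
    norm_num [mono]
    field_simp
    ring
  rw [h5, h6]
  field_simp
  ring

end
end
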